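/- Let x ∈ (0,1) be an irrational number and let n be a positive integer. If k = k(x,n) is the unique positive integer such that q_k(x) + q_{k−1}(x) ≤ n + 1 < q_{k+1}(x) + q_k(x), then the Lochs index from the Farey to the continued fraction sequence of partitions satisfies L_n(x, ℱ, 𝒞ℱ) = k; that is, k is the largest ℓ ∈ ℕ such that I_n^ℱ(x) ⊆ I_ℓ^{𝒞ℱ}(x). -/

import Mathlib

open MeasureTheory Filter Set

noncomputable section

/-- The set `E_n^ℱ` of endpoints of the Farey partition `F_n`: rationals of `[0,1]` whose
denominator in lowest terms is at most `n+1`. -/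
def fareyPts (n : ℕ) : Set ℝ :=
  {x | ∃ p q : ℕ, q ≠ 0 ∧ q ≤ n + 1 ∧ p ≤ q ∧ Nat.gcd p q = 1 ∧ x = (p : ℝ) / q}

/-- The interval `I_n^ℱ(x)` of the Farey partition `F_n` containing `x`: the open interval
between the largest Farey point of order `n+1` below `x` and the smallest one above `x`. -/
def fareyInterval (n : ℕ) (x : ℝ) : Set ℝ :=
  Set.Ioo (sSup (fareyPts n ∩ Set.Iio x)) (sInf (fareyPts n ∩ Set.Ioi x))

/-- The partial quotient `a_{m+1}` of the continued fraction expansion of `x ∈ (0,1)`,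
obtained from the Gauss map: `cfa x m = ⌊1 / T_G^m x⌋` where `T_G y = {1/y}`. -/
def cfa (x : ℝ) (m : ℕ) : ℕ := ⌊1 / ((fun y => Int.fract (1 / y))^[m] x)⌋₊

/-- Numerators of the convergents of `x`, shifted by one: `cfp x (m+1) = p_m`, with
`p_{-1} = 1`, `p_0 = 0`, `p_{m+1} = a_{m+1} p_m + p_{m-1}`. -/
def cfp (x : ℝ) : ℕ → ℕ
  | 0 => 1
  | 1 => 0
  | m + 2 => cfa x m * cfp x (m + 1) + cfp x m

/-- Denominators of the convergents of `x`, shifted by one: `cfq x (m+1) = q_m`, with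
`q_{-1} = 0`, `q_0 = 1`, `q_{m+1} = a_{m+1} q_m + q_{m-1}`. -/
def cfq (x : ℝ) : ℕ → ℕ
  | 0 => 0
  | 1 => 1
  | m + 2 => cfa x m * cfq x (m + 1) + cfq x m

/-- The fundamental interval `I_n^{𝒞ℱ}(x)` of depth `n` of the continued fraction
expansion: the open interval with endpoints `p_n/q_n` and `(p_n+p_{n-1})/(q_n+q_{n-1})`,
the former being the left endpoint iff `n` is even. -/
def cfInterval (x : ℝ) (n : ℕ) : Set ℝ :=
  if Even n then
    Set.Ioo ((cfp x (n + 1) : ℝ) / (cfq x (n + 1) : ℝ))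
      (((cfp x (n + 1) + cfp x n : ℕ) : ℝ) / ((cfq x (n + 1) + cfq x n : ℕ) : ℝ))
  else
    Set.Ioo (((cfp x (n + 1) + cfp x n : ℕ) : ℝ) / ((cfq x (n + 1) + cfq x n : ℕ) : ℝ))
      ((cfp x (n + 1) : ℝ) / (cfq x (n + 1) : ℝ))

/-- The Lochs index `L_n(x, 𝒞ℱ, ℱ)` from the continued fraction sequence of partitions to
the Farey sequence of partitions. -/
def lochsCFtoF (x : ℝ) (n : ℕ) : ℕ :=
  sSup {ℓ : ℕ | cfInterval x n ⊆ fareyInterval ℓ x}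

/-- The Lochs index `L_n(x, ℱ, 𝒞ℱ)` from the Farey sequence of partitions to the
continued fraction sequence of partitions. -/
def lochsFtoCF (x : ℝ) (n : ℕ) : ℕ :=
  sSup {ℓ : ℕ | fareyInterval n x ⊆ cfInterval x ℓ}

lemma tm_mem (x : ℝ) (hx : x ∈ Set.Ioo (0 : ℝ) 1) (hirr : Irrational x) (m : ℕ) :
    ((fun y : ℝ => Int.fract (1 / y))^[m] x) ∈ Set.Ioo (0 : ℝ) 1 ∧
    Irrational ((fun y : ℝ => Int.fract (1 / y))^[m] x) := by
  induction m with
  | zero => exact ⟨hx, hirr⟩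
  | succ m ih =>
    rw [Function.iterate_succ_apply']
    set t := ((fun y : ℝ => Int.fract (1 / y))^[m] x)
    have h : Irrational (Int.fract (1 / t)) := by
      rw [Int.fract, one_div]
      exact (ih.2.inv).sub_intCast _
    refine ⟨⟨lt_of_le_of_ne (Int.fract_nonneg _) (fun h0 => h.ne_zero h0.symm), Int.fract_lt_one _⟩, h⟩

lemma tm_step (x : ℝ) (hx : x ∈ Set.Ioo (0 : ℝ) 1) (hirr : Irrational x) (m : ℕ) :
    ((fun y : ℝ => Int.fract (1 / y))^[m] x) *
      (cfa x m + ((fun y : ℝ => Int.fract (1 / y))^[m+1] x)) = 1 ∧ 1 ≤ cfa x m := by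
  have ht := (tm_mem x hx hirr m).1
  rw [Function.iterate_succ_apply', cfa]
  set t := ((fun y : ℝ => Int.fract (1 / y))^[m] x)
  have h1 : 1 < 1 / t := by rw [lt_div_iff₀ ht.1]; linarith [ht.2]
  constructor
  · rw [natCast_floor_eq_intCast_floor (by linarith), Int.floor_add_fract]
    field_simp [ht.1.ne']
  · exact Nat.le_floor (by simpa using h1.le)

lemma cf_det (x : ℝ) (m : ℕ) :
    (cfp x m : ℤ) * cfq x (m+1) - cfp x (m+1) * cfq x m = (-1)^m := by
  induction m with
  | zero => simp [cfp, cfq]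
  | succ m ih =>
    have hp : cfp x (m+1+1) = cfa x m * cfp x (m + 1) + cfp x m := rfl
    have hq : cfq x (m+1+1) = cfa x m * cfq x (m + 1) + cfq x m := rfl
    rw [hp, hq, pow_succ, ← ih]; push_cast; ring

lemma cfq_pos (x : ℝ) (hx : x ∈ Set.Ioo (0 : ℝ) 1) (hirr : Irrational x) (m : ℕ) :
    0 < cfq x (m+1) ∧ cfq x m ≤ cfq x (m+1) := by
  induction m with
  | zero => simp [cfq]
  | succ m ih =>
    have hq : cfq x (m+1+1) = cfa x m * cfq x (m + 1) + cfq x m := rfl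
    have ha := (tm_step x hx hirr m).2
    rw [hq]
    constructor <;> nlinarith [ih.1]

lemma cfp_le (x : ℝ) (hx : x ∈ Set.Ioo (0 : ℝ) 1) (hirr : Irrational x) (m : ℕ) :
    cfp x (m+1) ≤ cfq x (m+1) ∧ cfp x (m+2) ≤ cfq x (m+2) := by
  induction m with
  | zero => 
    have ha := (tm_step x hx hirr 0).2
    simp [cfq, cfp, ha]
  | succ m ih =>
    have hp : cfp x (m+1+2) = cfa x (m+1) * cfp x (m + 2) + cfp x (m+1) := rfl
    have hq : cfq x (m+1+2) = cfa x (m+1) * cfq x (m + 2) + cfq x (m+1) := rfl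
    refine ⟨ih.2, ?_⟩
    rw [hp, hq]
    exact Nat.add_le_add (Nat.mul_le_mul_left _ ih.2) ih.1

lemma cf_x (x : ℝ) (hx : x ∈ Set.Ioo (0 : ℝ) 1) (hirr : Irrational x) (m : ℕ) :
    x * (cfq x (m+1) + ((fun y : ℝ => Int.fract (1 / y))^[m] x) * cfq x m)
      = cfp x (m+1) + ((fun y : ℝ => Int.fract (1 / y))^[m] x) * cfp x m := by
  induction m with
  | zero => simp [cfp, cfq]
  | succ m ih =>
    have hp : cfp x (m+1+1) = cfa x m * cfp x (m + 1) + cfp x m := rfl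
    have hq : cfq x (m+1+1) = cfa x m * cfq x (m + 1) + cfq x m := rfl
    have hs := (tm_step x hx hirr m).1
    have ht := (tm_mem x hx hirr m).1.1
    rw [hp, hq]; push_cast
    set t := ((fun y : ℝ => Int.fract (1 / y))^[m] x)
    set t' := ((fun y : ℝ => Int.fract (1 / y))^[m+1] x)
    apply mul_left_cancel₀ ht.ne'
    linear_combination ih + (x * cfq x (m+1) - cfp x (m+1)) * hs

lemma cf_sign (x : ℝ) (hx : x ∈ Set.Ioo (0 : ℝ) 1) (hirr : Irrational x) (m : ℕ) :
    0 < (-1:ℝ)^m * (x * cfq x (m+1) - cfp x (m+1)) ∧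
    (-1:ℝ)^m * (x * (cfq x (m+1) + cfq x m) - (cfp x (m+1) + cfp x m)) < 0 ∧
    (-1:ℝ)^m * (x * cfq x m - cfp x m) < 0 := by
  have hX := cf_x x hx hirr m
  obtain ⟨ht0, ht1⟩ := (tm_mem x hx hirr m).1
  set t := ((fun y : ℝ => Int.fract (1 / y))^[m] x)
  have hd : (cfp x m : ℝ) * cfq x (m+1) - cfp x (m+1) * cfq x m = (-1)^m := by
    exact_mod_cast cf_det x m
  have hQ : (0:ℝ) < cfq x (m+1) := by exact_mod_cast (cfq_pos x hx hirr m).1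
  have hq : (0:ℝ) ≤ cfq x m := by positivity
  have hs : (-1:ℝ)^m * (-1)^m = 1 := by rw [← mul_pow]; simp
  set s : ℝ := (-1)^m
  have hD : 0 < cfq x (m+1) + t * cfq x m := by positivity
  have e1 : s * (x * cfq x (m+1) - cfp x (m+1)) * (cfq x (m+1) + t * cfq x m) = t := by
    linear_combination s * cfq x (m+1) * hX + s * t * hd + t * hs
  have e2 : s * (x * cfq x m - cfp x m) * (cfq x (m+1) + t * cfq x m) = -1 := by
    linear_combination s * cfq x m * hX - s * hd - hs
  have f1 : 0 < s * (x * cfq x (m+1) - cfp x (m+1)) :=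
    pos_of_mul_pos_left (by rw [e1]; exact ht0) hD.le
  have f2 : s * (x * cfq x m - cfp x m) < 0 := by
    by_contra h; push Not at h; nlinarith [mul_nonneg h hD.le]
  refine ⟨f1, ?_, f2⟩
  by_contra h; push Not at h
  nlinarith [mul_nonneg h hD.le]

lemma between_denom (P Q p q a b : ℤ) (hQ : 0 ≤ Q) (hq : 0 ≤ q) (hd : p * Q - P * q = 1)
    (h1 : P * b < a * Q) (h2 : a * q < p * b) : Q + q ≤ b := by
  have : b = Q * (p * b - a * q) + q * (a * Q - P * b) := by linear_combination (-b) * hd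
  nlinarith

lemma farey_mem (n p q : ℕ) (u v : ℤ) (hq : 0 < q) (hqn : q ≤ n + 1) (hpq : p ≤ q)
    (h : u * p + v * q = 1) : ((p : ℝ) / q) ∈ fareyPts n := by
  refine ⟨p, q, hq.ne', hqn, hpq, ?_, rfl⟩
  exact Nat.isCoprime_iff_coprime.1 ⟨u, v, h⟩

lemma farey_sub (n : ℕ) (x c d : ℝ) (hc : c ∈ fareyPts n) (hd : d ∈ fareyPts n) (hcx : c < x)
    (hxd : x < d) : fareyInterval n x ⊆ Set.Ioo c d := by
  apply Set.Ioo_subset_Ioo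
  · exact le_csSup ⟨x, fun y hy => hy.2.le⟩ ⟨hc, hcx⟩
  · exact csInf_le ⟨x, fun y hy => hy.2.le⟩ ⟨hd, hxd⟩

lemma zero_mem_farey (n : ℕ) : (0:ℝ) ∈ fareyPts n := ⟨0, 1, by simp, by simp, by simp, by simp, by simp⟩
lemma one_mem_farey (n : ℕ) : (1:ℝ) ∈ fareyPts n := ⟨1, 1, by simp, by simp, by simp, by simp, by simp⟩

lemma cf_mem (x : ℝ) (hx : x ∈ Set.Ioo (0 : ℝ) 1) (hirr : Irrational x)
    (n k : ℕ) (hk : 1 ≤ k) (h1 : cfq x (k + 1) + cfq x k ≤ n + 1) :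
    fareyInterval n x ⊆ cfInterval x k := by
  obtain ⟨s1, s2, -⟩ := cf_sign x hx hirr k
  obtain ⟨j, rfl⟩ : ∃ j, k = j + 1 := ⟨k - 1, by omega⟩
  have hQ := (cfq_pos x hx hirr (j+1)).1
  obtain ⟨l1, l2⟩ := cfp_le x hx hirr j
  have hd := cf_det x (j+1)
  have hs : (-1:ℤ)^(j+1) * (-1)^(j+1) = 1 := by rw [← mul_pow]; simp
  have hQ' : (0:ℝ) < cfq x (j+1+1) := by exact_mod_cast hQ
  have hQq' : (0:ℝ) < ((cfq x (j+1+1) + cfq x (j+1) : ℕ) : ℝ) := by exact_mod_cast (by omega)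
  have m1 : ((cfp x (j+1+1) : ℝ) / cfq x (j+1+1)) ∈ fareyPts n :=
    farey_mem n _ _ (-(-1)^(j+1) * cfq x (j+1)) ((-1)^(j+1) * cfp x (j+1)) hQ (by omega) l2
      (by linear_combination (-1)^(j+1) * hd + hs)
  have m2 : (((cfp x (j+1+1) + cfp x (j+1) : ℕ) : ℝ) / ((cfq x (j+1+1) + cfq x (j+1) : ℕ) : ℝ))
      ∈ fareyPts n :=
    farey_mem n _ _ ((-1)^(j+1) * cfq x (j+1+1)) (-(-1)^(j+1) * cfp x (j+1+1)) (by omega) h1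
      (by have : j + 1 + 1 = j + 2 := rfl
          rw [this]; omega) (by push_cast; linear_combination (-1)^(j+1) * hd + hs)
  unfold cfInterval
  split_ifs with he
  · rw [he.neg_one_pow] at s1 s2
    apply farey_sub n x _ _ m1 m2
    · rw [div_lt_iff₀ hQ']; linarith
    · rw [lt_div_iff₀ hQq']; push_cast; linarith
  · rw [(Nat.not_even_iff_odd.1 he).neg_one_pow] at s1 s2
    apply farey_sub n x _ _ m2 m1
    · rw [div_lt_iff₀ hQq']; push_cast; linarith
    · rw [lt_div_iff₀ hQ']; linarith

lemma cf_not_mem (x : ℝ) (hx : x ∈ Set.Ioo (0 : ℝ) 1) (hirr : Irrational x)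
    (n k : ℕ) (hk : 1 ≤ k) (h1 : n + 1 < cfq x (k + 1) + cfq x k) :
    ¬ fareyInterval n x ⊆ cfInterval x k := by
  obtain ⟨s1, s2, s3⟩ := cf_sign x hx hirr k
  have hd := cf_det x k
  have hQ : (0:ℝ) < cfq x (k+1) := by exact_mod_cast (cfq_pos x hx hirr k).1
  have hq : (0:ℝ) < cfq x k := by
    obtain ⟨j, rfl⟩ : ∃ j, k = j + 1 := ⟨k - 1, by omega⟩
    exact_mod_cast (cfq_pos x hx hirr j).1
  have hQq : (0:ℝ) < cfq x (k+1) + cfq x k := by positivity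
  have hdR : (cfp x k : ℝ) * cfq x (k+1) - cfp x (k+1) * cfq x k = (-1)^k := by
    exact_mod_cast hd
  set P := cfp x (k+1) with hP
  set p := cfp x k
  set Q := cfq x (k+1)
  set q := cfq x k
  intro hsub
  have key : (((P + p : ℕ) : ℝ) / ((Q + q : ℕ) : ℝ)) ∈ fareyInterval n x := by
    push_cast
    rcases Nat.even_or_odd k with he | ho
    · rw [he.neg_one_pow] at s1 s2 s3 hd hdR
      constructor
      · refine lt_of_le_of_lt (csSup_le ⟨0, zero_mem_farey n, hx.1⟩ fun y hy => hy.2.le) ?_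
        rw [lt_div_iff₀ hQq]; linarith
      · refine lt_of_lt_of_le (b := (p:ℝ)/q) ?_ (le_csInf ⟨1, one_mem_farey n, hx.2⟩ ?_)
        · rw [div_lt_div_iff₀ hQq hq]; nlinarith
        · rintro y ⟨⟨a, b, hb, hbn, -, -, rfl⟩, hy⟩
          by_contra hlt
          push Not at hlt
          have hb' : (0:ℝ) < b := by positivity
          have hy' : (P:ℝ)/Q < a / b := lt_trans (by rw [div_lt_iff₀ hQ]; linarith) hy
          rw [div_lt_div_iff₀ hQ hb'] at hy'
          rw [div_lt_div_iff₀ hb' hq] at hlt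
          have := between_denom P Q p q a b (by positivity) (by positivity) hd
            (by exact_mod_cast hy') (by exact_mod_cast hlt)
          omega
    · rw [ho.neg_one_pow] at s1 s2 s3 hd hdR
      constructor
      · refine lt_of_le_of_lt (b := (p:ℝ)/q) (csSup_le ⟨0, zero_mem_farey n, hx.1⟩ ?_) ?_
        · rintro y ⟨⟨a, b, hb, hbn, -, -, rfl⟩, hy⟩
          by_contra hlt
          push Not at hlt
          have hb' : (0:ℝ) < b := by positivity
          have hy' : (a:ℝ)/b < P / Q := lt_trans hy (by rw [lt_div_iff₀ hQ]; linarith)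
          rw [div_lt_div_iff₀ hb' hQ] at hy'
          rw [div_lt_div_iff₀ hq hb'] at hlt
          have := between_denom p q P Q a b (by positivity) (by positivity) (by linarith)
            (by exact_mod_cast hlt) (by exact_mod_cast hy')
          omega
        · rw [div_lt_div_iff₀ hq hQq]; nlinarith
      · refine lt_of_lt_of_le ?_ (le_csInf ⟨1, one_mem_farey n, hx.2⟩ fun y hy => hy.2.le)
        rw [div_lt_iff₀ hQq]; linarith
  have := hsub key
  unfold cfInterval at this
  split_ifs at this
  · exact lt_irrefl _ this.2
  · exact lt_irrefl _ this.1

/-- The Lochs index from the Farey to the continued fraction sequence of partitions: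
if `q_k + q_{k-1} ≤ n + 1 < q_{k+1} + q_k`, then `L_n(x, ℱ, 𝒞ℱ) = k`
(with `q_k = cfq x (k+1)`, `q_{k-1} = cfq x k`, `q_{k+1} = cfq x (k+2)`). -/
theorem lochsFtoCF_eq (x : ℝ) (hx : x ∈ Set.Ioo (0 : ℝ) 1) (hirr : Irrational x)
    (n k : ℕ) (hn : 1 ≤ n) (hk : 1 ≤ k)
    (h1 : cfq x (k + 1) + cfq x k ≤ n + 1)
    (h2 : n + 1 < cfq x (k + 2) + cfq x (k + 1)) :
    lochsFtoCF x n = k := by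
  refine IsGreatest.csSup_eq ⟨cf_mem x hx hirr n k hk h1, ?_⟩
  intro l hl
  by_contra hlt
  push Not at hlt
  refine cf_not_mem x hx hirr n l (by omega) (lt_of_lt_of_le h2 ?_) hl
  have hm : Monotone (cfq x) := monotone_nat_of_le_succ fun m => (cfq_pos x hx hirr m).2
  exact Nat.add_le_add (hm (by omega)) (hm (by omega))
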